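/- arXiv:1901.05895 — 6 statements merged into one kernel-verified Lean document; each statement's English description precedes it below -/
import Mathlib

section
/- Let N be a bipartite quantum channel taking matrices on ℂ^{d_{A'}} ⊗ ℂ^{d_{B'}} to matrices on ℂ^{d_A} ⊗ ℂ^{d_B}, and let d_{L_A}, d_{L_B} be finite ancilla dimensions. For a density matrix τ on a bipartite space with cut X:Y, let E_max(X;Y)_τ = min{ D_max(τ‖σ) : σ ∈ SEP(X:Y) } be the max-relative entropy of entanglement. Then for every density matrix ρ on L_A ⊗ A' ⊗ B' ⊗ L_B: E_max(L_A A ; B L_B)_{N(ρ)} ≤ E_max(L_A A' ; B' L_B)_ρ + sup{ E_max(L_A A ; B L_B)_{N(σ')} : σ' ∈ SEP(L_A A' : B' L_B) }, where N(ρ) = (id_{L_A} ⊗ N ⊗ id_{L_B})(ρ). (The supremum on the right is the bidirectional max-relative entropy of entanglement E^{2→2}_max(N) of the channel, evaluated over separable inputs on these ancillas; thus amortization does not enhance it.) -/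
open Matrix Kronecker
open scoped ComplexOrder

noncomputable section

/-- A density matrix: positive semidefinite with unit trace. -/
def DensityMatrix {n : Type*} [Fintype n] (ρ : Matrix n n ℂ) : Prop :=
  ρ.PosSemidef ∧ ρ.trace = 1

/-- The extension `id_r ⊗ N` of a linear map `N` on matrices. -/
def idTensor {m n r : Type*} (N : Matrix m m ℂ →ₗ[ℂ] Matrix n n ℂ)
    (ρ : Matrix (r × m) (r × m) ℂ) : Matrix (r × n) (r × n) ℂ :=
  Matrix.of fun p q => N (Matrix.of fun u v => ρ (p.1, u) (q.1, v)) p.2 q.2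

/-- A quantum channel: a trace-preserving and completely positive linear map on matrices. -/
def IsQuantumChannel {m n : Type*} [Fintype m] [Fintype n]
    (N : Matrix m m ℂ →ₗ[ℂ] Matrix n n ℂ) : Prop :=
  (∀ X, (N X).trace = X.trace) ∧
  ∀ (k : ℕ) (ρ : Matrix (Fin k × m) (Fin k × m) ℂ), ρ.PosSemidef → (idTensor N ρ).PosSemidef

/-- The extension `id_{L_A} ⊗ N ⊗ id_{L_B}` of a bipartite linear map `N` on matrices,
where the total space is grouped as `(L_A × A') × (B' × L_B)`. -/
def extendChannel {mA mB nA nB LA LB : Type*}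
    (N : Matrix (mA × mB) (mA × mB) ℂ →ₗ[ℂ] Matrix (nA × nB) (nA × nB) ℂ)
    (ρ : Matrix ((LA × mA) × (mB × LB)) ((LA × mA) × (mB × LB)) ℂ) :
    Matrix ((LA × nA) × (nB × LB)) ((LA × nA) × (nB × LB)) ℂ :=
  Matrix.of fun p q =>
    N (Matrix.of fun xy x'y' =>
        ρ ((p.1.1, xy.1), (xy.2, p.2.2)) ((q.1.1, x'y'.1), (x'y'.2, q.2.2)))
      (p.1.2, p.2.1) (q.1.2, q.2.1)

/-- Separability of a bipartite state with respect to the cut `X : Y`. -/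
def SepState {X Y : Type*} [Fintype X] [Fintype Y]
    (ρ : Matrix (X × Y) (X × Y) ℂ) : Prop :=
  ∃ (k : ℕ) (p : Fin k → ℝ) (ω : Fin k → Matrix X X ℂ) (τ : Fin k → Matrix Y Y ℂ),
    (∀ z, 0 ≤ p z) ∧ (∑ z, p z = 1) ∧ (∀ z, DensityMatrix (ω z)) ∧
    (∀ z, DensityMatrix (τ z)) ∧ ρ = ∑ z, p z • (ω z ⊗ₖ τ z)

/-- The max-relative entropy `D_max(ρ‖σ) = log₂ min{λ ≥ 0 : λσ − ρ ⪰ 0}`, as an extended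
real (`+∞` when infeasible). -/
def DmaxE {n : Type*} [Fintype n] (ρ σ : Matrix n n ℂ) : EReal :=
  sInf {x : EReal | ∃ lam : ℝ, 0 ≤ lam ∧ (((lam : ℂ)) • σ - ρ).PosSemidef ∧
    x = ((Real.logb 2 lam : ℝ) : EReal)}

/-- The max-relative entropy of entanglement
`E_max(X;Y)_ρ = min_{σ ∈ SEP(X:Y)} D_max(ρ‖σ)`. -/
def EmaxE {X Y : Type*} [Fintype X] [Fintype Y] (ρ : Matrix (X × Y) (X × Y) ℂ) : EReal :=
  sInf {x : EReal | ∃ σ : Matrix (X × Y) (X × Y) ℂ,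
    DensityMatrix σ ∧ SepState σ ∧ x = DmaxE ρ σ}


theorem sep_exists {X Y : Type*} [Fintype X] [Fintype Y] [DecidableEq X] [DecidableEq Y]
    (i : X) (j : Y) : ∃ σ : Matrix (X × Y) (X × Y) ℂ, DensityMatrix σ ∧ SepState σ := by
  have h1 : ∀ {Z : Type _} [Fintype Z] [DecidableEq Z] (z : Z),
      DensityMatrix (Matrix.diagonal (Pi.single z (1:ℂ))) := by
    intro Z _ _ z
    refine ⟨Matrix.PosSemidef.diagonal ?_, ?_⟩
    · exact Pi.single_nonneg.2 zero_le_one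
    · simp [Matrix.trace_diagonal]
  have h2 : ∀ {Z : Type _} [Fintype Z] [DecidableEq Z] (z : Z),
      DensityMatrix (Matrix.diagonal (Pi.single z (1:ℂ))) := by
    intro Z _ _ z
    refine ⟨Matrix.PosSemidef.diagonal ?_, ?_⟩
    · exact Pi.single_nonneg.2 zero_le_one
    · simp [Matrix.trace_diagonal]
  refine ⟨Matrix.diagonal (Pi.single i (1:ℂ)) ⊗ₖ Matrix.diagonal (Pi.single j (1:ℂ)), ⟨?_, ?_⟩,
    1, fun _ => 1, fun _ => Matrix.diagonal (Pi.single i (1:ℂ)),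
    fun _ => Matrix.diagonal (Pi.single j (1:ℂ)), ?_, ?_, fun _ => h1 i, fun _ => h2 j, ?_⟩
  · exact (h1 i).1.kronecker (h2 j).1
  · rw [Matrix.trace_kronecker, (h1 i).2, (h2 j).2, one_mul]
  · intro _; exact zero_le_one
  · simp
  · simp

theorem one_le_of_psd {n : Type*} [Fintype n] {ρ σ : Matrix n n ℂ} (hρ : ρ.trace = 1)
    (hσ : σ.trace = 1) {lam : ℝ} (h : ((lam : ℂ) • σ - ρ).PosSemidef) : 1 ≤ lam := by
  have h0 := h.trace_nonneg
  rw [Matrix.trace_sub, Matrix.trace_smul, hρ, hσ, smul_eq_mul, mul_one] at h0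
  have h1 : (1:ℂ) ≤ (lam : ℂ) := sub_nonneg.1 h0
  exact_mod_cast h1

theorem Emax_nonneg {X Y : Type*} [Fintype X] [Fintype Y] {ρ : Matrix (X × Y) (X × Y) ℂ}
    (hρ : ρ.trace = 1) : 0 ≤ EmaxE ρ := by
  refine le_sInf ?_
  rintro _ ⟨σ, hσ, -, rfl⟩
  refine le_sInf ?_
  rintro _ ⟨lam, -, h, rfl⟩
  exact EReal.coe_nonneg.2 (Real.logb_nonneg (by norm_num) (one_le_of_psd hρ hσ.2 h))

section ext
variable {mA mB nA nB LA LB : Type*} [Fintype mA] [Fintype mB] [Fintype nA] [Fintype nB]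
  [Fintype LA] [Fintype LB]
  (N : Matrix (mA × mB) (mA × mB) ℂ →ₗ[ℂ] Matrix (nA × nB) (nA × nB) ℂ)

theorem ext_psd (hN : IsQuantumChannel N)
    {ρ : Matrix ((LA × mA) × (mB × LB)) ((LA × mA) × (mB × LB)) ℂ} (hρ : ρ.PosSemidef) :
    (extendChannel N ρ).PosSemidef := by
  let e := Fintype.equivFin (LA × LB)
  let f : Fin (Fintype.card (LA × LB)) × (mA × mB) → (LA × mA) × (mB × LB) :=
    fun x => (((e.symm x.1).1, x.2.1), (x.2.2, (e.symm x.1).2))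
  let g : (LA × nA) × (nB × LB) → Fin (Fintype.card (LA × LB)) × (nA × nB) :=
    fun p => (e (p.1.1, p.2.2), (p.1.2, p.2.1))
  have h := (hN.2 _ _ (hρ.submatrix f)).submatrix g
  convert h using 1
  ext p q
  simp [extendChannel, idTensor, f, g]

theorem ext_trace (hN : IsQuantumChannel N)
    (ρ : Matrix ((LA × mA) × (mB × LB)) ((LA × mA) × (mB × LB)) ℂ) :
    (extendChannel N ρ).trace = ρ.trace := by
  have h : ∀ a : LA, ∀ b : LB, ∑ x : nA, ∑ y : nB,
      N (Matrix.of fun xy x'y' => ρ ((a, xy.1), (xy.2, b)) ((a, x'y'.1), (x'y'.2, b)))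
        (x, y) (x, y) = ∑ x : mA, ∑ y : mB, ρ ((a, x), (y, b)) ((a, x), (y, b)) := by
    intro a b
    have := hN.1 (Matrix.of fun xy x'y' => ρ ((a, xy.1), (xy.2, b)) ((a, x'y'.1), (x'y'.2, b)))
    simpa [Matrix.trace, Fintype.sum_prod_type] using this
  have sw : ∀ {P Q : Type _} [Fintype P] [Fintype Q] (F : LA → P → Q → LB → ℂ),
      ∑ a, ∑ x, ∑ y, ∑ b, F a x y b = ∑ a, ∑ b, ∑ x, ∑ y, F a x y b := by
    intro P Q _ _ F
    refine Finset.sum_congr rfl fun a _ => ?_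
    rw [Finset.sum_comm (s := (Finset.univ : Finset LB))]
    refine Finset.sum_congr rfl fun x _ => ?_
    rw [Finset.sum_comm]
  have sw2 : ∀ {P Q : Type _} [Fintype P] [Fintype Q] (F : LA → P → Q → LB → ℂ),
      ∑ a, ∑ x, ∑ y, ∑ b, F a x y b = ∑ a, ∑ b, ∑ x, ∑ y, F a x y b := by
    intro P Q _ _ F
    refine Finset.sum_congr rfl fun a _ => ?_
    rw [Finset.sum_comm (s := (Finset.univ : Finset LB))]
    refine Finset.sum_congr rfl fun x _ => ?_
    rw [Finset.sum_comm]
  simp only [Matrix.trace, Fintype.sum_prod_type, Matrix.diag_apply, extendChannel, Matrix.of_apply]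
  rw [sw, sw2]
  exact Finset.sum_congr rfl fun a _ => Finset.sum_congr rfl fun b _ => h a b

theorem ext_sub_smul (c : ℂ)
    (σ ρ : Matrix ((LA × mA) × (mB × LB)) ((LA × mA) × (mB × LB)) ℂ) :
    extendChannel N (c • σ - ρ) = c • extendChannel N σ - extendChannel N ρ := by
  ext p q
  simp only [extendChannel, Matrix.of_apply, Matrix.sub_apply, Matrix.smul_apply]
  rw [← Matrix.smul_apply, ← Matrix.sub_apply, ← map_smul, ← map_sub]
  rfl

end ext

/-- amortization does not enhance the bidirectional max-relative entropy of
entanglement: `E_max(L_A A ; B L_B)_{N(ρ)} ≤ E_max(L_A A' ; B' L_B)_ρ + E^{2→2}_max(N)`,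
where `E^{2→2}_max(N)` is the supremum of `E_max` of the channel output over separable
input states on these ancillas. -/
theorem stmt1 {dA' dB' dA dB : ℕ}
    (N : Matrix (Fin dA' × Fin dB') (Fin dA' × Fin dB') ℂ →ₗ[ℂ]
      Matrix (Fin dA × Fin dB) (Fin dA × Fin dB) ℂ)
    (hN : IsQuantumChannel N)
    (dLA dLB : ℕ)
    (ρ : Matrix ((Fin dLA × Fin dA') × (Fin dB' × Fin dLB))
      ((Fin dLA × Fin dA') × (Fin dB' × Fin dLB)) ℂ)
    (hρ : DensityMatrix ρ) :
    EmaxE (extendChannel N ρ)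
      ≤ EmaxE ρ +
        sSup {x : EReal | ∃ σ' : Matrix ((Fin dLA × Fin dA') × (Fin dB' × Fin dLB))
            ((Fin dLA × Fin dA') × (Fin dB' × Fin dLB)) ℂ,
          DensityMatrix σ' ∧ SepState σ' ∧ x = EmaxE (extendChannel N σ')} := by
  have htr : (extendChannel N ρ).trace = 1 := by rw [ext_trace N hN, hρ.2]
  have hne : Nonempty ((Fin dLA × Fin dA') × (Fin dB' × Fin dLB)) := by
    by_contra hcon
    rw [not_nonempty_iff] at hcon
    have := hρ.2
    simp [Matrix.trace] at this
  obtain ⟨⟨i, j⟩⟩ := hne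
  obtain ⟨σ₀, hσ₀, hs₀⟩ := sep_exists i j
  have hE0 := Emax_nonneg hρ.2
  generalize hS : sSup {x : EReal | ∃ σ' : Matrix ((Fin dLA × Fin dA') × (Fin dB' × Fin dLB))
            ((Fin dLA × Fin dA') × (Fin dB' × Fin dLB)) ℂ,
          DensityMatrix σ' ∧ SepState σ' ∧ x = EmaxE (extendChannel N σ')} = S
  have hle : ∀ σ' : Matrix ((Fin dLA × Fin dA') × (Fin dB' × Fin dLB))
      ((Fin dLA × Fin dA') × (Fin dB' × Fin dLB)) ℂ, DensityMatrix σ' → SepState σ' → EmaxE (extendChannel N σ') ≤ S := by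
    intro σ' h1 h2
    rw [← hS]
    exact le_sSup ⟨σ', h1, h2, rfl⟩
  have hS0 : 0 ≤ S := (Emax_nonneg (by rw [ext_trace N hN, hσ₀.2])).trans (hle σ₀ hσ₀ hs₀)
  have hSb : S ≠ ⊥ := fun h => by simp [h] at hS0
  by_cases hSt : S = ⊤
  · rw [hSt, EReal.add_top_of_ne_bot (fun h => by simp [h] at hE0)]
    exact le_top
  rw [← EReal.sub_le_iff_le_add (Or.inl hSb) (Or.inl hSt)]
  refine le_sInf ?_
  rintro _ ⟨σ, hσ, hs, rfl⟩
  refine le_sInf ?_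
  rintro _ ⟨lam, hl0, hl, rfl⟩
  have hl1 := one_le_of_psd hρ.2 hσ.2 hl
  rw [EReal.sub_le_iff_le_add (Or.inl hSb) (Or.inl hSt), add_comm,
    ← EReal.sub_le_iff_le_add (Or.inl (EReal.coe_ne_bot _)) (Or.inl (EReal.coe_ne_top _))]
  refine le_trans ?_ (hle σ hσ hs)
  refine le_sInf ?_
  rintro _ ⟨τ, hτ, ht, rfl⟩
  refine le_sInf ?_
  rintro _ ⟨mu, hm0, hm, rfl⟩
  have hm1 := one_le_of_psd (by rw [ext_trace N hN, hσ.2]) hτ.2 hm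
  rw [EReal.sub_le_iff_le_add (Or.inl (EReal.coe_ne_bot _)) (Or.inl (EReal.coe_ne_top _)),
    ← EReal.coe_add, ← Real.logb_mul (by linarith) (by linarith)]
  refine (sInf_le ⟨τ, hτ, ht, rfl⟩ : EmaxE _ ≤ DmaxE _ τ).trans (sInf_le ?_)
  refine ⟨mu * lam, mul_nonneg hm0 hl0, ?_, rfl⟩
  have h1 := ext_psd N hN hl
  rw [ext_sub_smul] at h1
  have h2 := (hm.smul (show (0:ℂ) ≤ (lam:ℂ) by exact_mod_cast hl0)).add h1
  convert h2 using 1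
  rw [smul_sub, smul_smul]
  push_cast
  rw [mul_comm (mu : ℂ)]
  abel
end
end

section
/- Let 1 ≤ d_A ≤ d_B and ε ∈ (0,1). Let ψ_AB be a rank-one density matrix (pure state) on ℂ^{d_A} ⊗ ℂ^{d_B} whose reduced state ψ_A = Tr_B(ψ_AB) satisfies S(ψ_A) ≥ (1 − ε)·log₂ d_A. Then there exists a unitary U_B on ℂ^{d_B} such that (1/2)·‖(1 ⊗ U_B) ψ_AB (1 ⊗ U_B)† − Φ_AB‖₁ ≤ (2 ε ln d_A)^{1/4}, where Φ_AB is the maximally entangled state of Schmidt rank d_A and ln denotes the natural logarithm. -/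
open Matrix Kronecker
open scoped ComplexOrder

noncomputable section

/-- The trace norm of a matrix: the sum of its singular values, i.e. `Tr √(XᴴX)`. -/
def traceNorm {m n : Type*} [Fintype m] [Fintype n] [DecidableEq n] (X : Matrix m n ℂ) : ℝ :=
  ∑ i, Real.sqrt ((Matrix.posSemidef_conjTranspose_mul_self X).1.eigenvalues i)

/-- The von Neumann entropy (base 2) of a matrix, via its eigenvalues. -/
def entropy {n : Type*} [Fintype n] [DecidableEq n] (ρ : Matrix n n ℂ) : ℝ :=
  if h : ρ.IsHermitian then (∑ i, Real.negMulLog (h.eigenvalues i)) / Real.log 2 else 0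

/-- Partial trace over the second tensor factor. -/
def ptraceR {X Y : Type*} [Fintype Y] (M : Matrix (X × Y) (X × Y) ℂ) : Matrix X X ℂ :=
  Matrix.of fun i j => ∑ k, M (i, k) (j, k)

/-- The maximally entangled state `Φ` of Schmidt rank `dA` on `ℂ^{dA} ⊗ ℂ^{dB}` (`dA ≤ dB`),
`|φ⟩ = (1/√dA) ∑_{i<dA} |i⟩ ⊗ |i⟩`. -/
def maxEnt (dA dB : ℕ) : Matrix (Fin dA × Fin dB) (Fin dA × Fin dB) ℂ :=
  Matrix.of fun p q =>
    if ((p.2 : ℕ) = (p.1 : ℕ) ∧ (q.2 : ℕ) = (q.1 : ℕ)) then ((dA : ℂ))⁻¹ else 0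

theorem aux_scalar {n : ℕ} (hn : 1 ≤ n) (p : Fin n → ℝ) (hp : ∀ i, 0 ≤ p i)
    (hs : ∑ i, p i = 1) :
    1 - ((∑ i, √(p i)) / √n) ^ 2 ≤ Real.log n - ∑ i, Real.negMulLog (p i) := by
  have hn0 : (0:ℝ) < n := by exact_mod_cast hn
  have hsn : 0 < √(n:ℝ) := Real.sqrt_pos.2 hn0
  have key : ∀ i, Real.negMulLog (p i) - p i * Real.log n ≤ 2 * (√(p i) / √n - p i) := by
    intro i
    rcases (hp i).eq_or_lt with h | h
    · simp [← h]
    · have hsp : 0 < √(p i) := Real.sqrt_pos.2 h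
      have h1 := Real.log_le_sub_one_of_pos (x := 1 / (√(p i) * √n)) (by positivity)
      rw [Real.log_div one_ne_zero (by positivity), Real.log_mul hsp.ne' hsn.ne',
        Real.log_sqrt (hp i), Real.log_sqrt hn0.le, Real.log_one] at h1
      have h2 := mul_le_mul_of_nonneg_left h1 (by positivity : 0 ≤ 2 * p i)
      have h3 : p i * (1 / (√(p i) * √n)) = √(p i) / √n := by
        field_simp
        rw [Real.sq_sqrt (hp i)]
      unfold Real.negMulLog
      nlinarith
  have hsum := Finset.sum_le_sum (fun i (_ : i ∈ Finset.univ) => key i)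
  rw [Finset.sum_sub_distrib, ← Finset.sum_mul, hs, ← Finset.mul_sum, Finset.sum_sub_distrib,
    hs, ← Finset.sum_div] at hsum
  nlinarith [sq_nonneg (1 - (∑ i, √(p i)) / √n)]

theorem aux_trace {n : Type*} [Fintype n] [DecidableEq n] {A : Matrix n n ℂ}
    (hA : A.IsHermitian) : A.trace = ((∑ i, hA.eigenvalues i : ℝ) : ℂ) := by
  rw [hA.trace_eq_sum_eigenvalues, Complex.ofReal_sum]; rfl

theorem aux_traceNorm {n : Type*} [Fintype n] [DecidableEq n] (x y : n → ℂ) (F : ℝ)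
    (hx : star x ⬝ᵥ x = 1) (hy : star y ⬝ᵥ y = 1) (hF : star y ⬝ᵥ x = F) :
    traceNorm (vecMulVec x (star x) - vecMulVec y (star y)) ≤ 2 * √(1 - F ^ 2) := by
  set X := vecMulVec x (star x) - vecMulVec y (star y) with hX
  have hF' : star x ⬝ᵥ y = F := by
    have := congrArg star hF
    rw [star_dotProduct, star_star] at this
    rw [this]; simp
  have hrank : X.rank ≤ 2 := by
    have : X = (Matrix.of fun i (b : Fin 2) => if b = 0 then x i else y i) *
        (Matrix.of fun (b : Fin 2) j => if b = 0 then star (x j) else - star (y j)) := by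
      ext i j
      simp [hX, Matrix.mul_apply, vecMulVec_apply, Fin.sum_univ_two, sub_eq_add_neg]
    rw [this]
    exact (rank_mul_le_left _ _).trans ((rank_le_card_width _).trans (by simp))
  have hH := (Matrix.posSemidef_conjTranspose_mul_self X)
  have hXH : Xᴴ = X := by
    simp [hX, conjTranspose_vecMulVec]
  have htr : (Xᴴ * X).trace = ((2 - 2 * F ^ 2 : ℝ) : ℂ) := by
    rw [hXH, hX]
    simp only [sub_mul, mul_sub, vecMulVec_mul_vecMulVec, trace_sub, trace_vecMulVec,
      hx, hy, hF, hF', dotProduct_smul, dotProduct_comm x (star x), dotProduct_comm y (star y),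
      dotProduct_comm x (star y), dotProduct_comm y (star x)]
    push_cast
    simp
    ring
  have hsum : ∑ i, hH.1.eigenvalues i = 2 - 2 * F ^ 2 := by
    rw [aux_trace hH.1] at htr
    exact_mod_cast htr
  have hcard : Fintype.card {i // hH.1.eigenvalues i ≠ 0} ≤ 2 := by
    rw [← hH.1.rank_eq_card_non_zero_eigs, rank_conjTranspose_mul_self]
    exact hrank
  have hnn := hH.eigenvalues_nonneg
  unfold traceNorm
  set l := hH.1.eigenvalues with hl
  rw [Fintype.card_subtype] at hcard
  have e1 : ∑ i, √(l i) = ∑ i with l i ≠ 0, √(l i) := by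
    rw [Finset.sum_filter_of_ne]
    intro i _ h h0
    simp [h0] at h
  have e2 : ∑ i with l i ≠ 0, √(l i) ^ 2 = 2 - 2 * F ^ 2 := by
    rw [← hsum, ← Finset.sum_filter_of_ne (p := fun i => l i ≠ 0) (s := Finset.univ) (f := l)
      (fun i _ h => h)]
    exact Finset.sum_congr rfl fun i _ => Real.sq_sqrt (hnn i)
  have cs := sq_sum_le_card_mul_sum_sq (s := Finset.univ.filter fun i => l i ≠ 0)
    (f := fun i => √(l i))
  rw [e2] at cs
  rw [e1]
  have h0 : 0 ≤ 2 - 2 * F ^ 2 := by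
    rw [← e2]; exact Finset.sum_nonneg fun i _ => sq_nonneg _
  have hc : ((Finset.univ.filter fun i => l i ≠ 0).card : ℝ) ≤ 2 := by exact_mod_cast hcard
  have h4 : 2 * √(1 - F ^ 2) = √(2 ^ 2 * (1 - F ^ 2)) := by
    rw [Real.sqrt_mul (by norm_num), Real.sqrt_sq (by norm_num)]
  rw [h4]
  apply Real.le_sqrt_of_sq_le
  nlinarith

theorem aux_complete {a b : ℕ} (h : a ≤ b) (B : Matrix (Fin b) (Fin a) ℂ) (p : Fin a → ℝ)
    (hp : ∀ i, 0 ≤ p i) (hB : Bᴴ * B = diagonal (fun i => (p i : ℂ))) :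
    ∃ W ∈ Matrix.unitaryGroup (Fin b) ℂ,
      B = W.submatrix id (Fin.castLE h) * diagonal (fun i => ((√(p i) : ℝ) : ℂ)) := by
  let v : Fin b → EuclideanSpace ℂ (Fin b) := fun j =>
    if hj : (j : ℕ) < a then
      WithLp.toLp 2 (fun i => ((√(p ⟨j, hj⟩) : ℝ) : ℂ)⁻¹ * B i ⟨j, hj⟩) else 0
  let s : Set (Fin b) := {j | ∃ hj : (j : ℕ) < a, p ⟨j, hj⟩ ≠ 0}
  have hBe : ∀ i j, ∑ k, star (B k i) * B k j = if i = j then (p i : ℂ) else 0 := by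
    intro i j
    have := congrFun (congrFun hB i) j
    simpa [Matrix.mul_apply, diagonal_apply] using this
  have hv : Orthonormal ℂ (s.domRestrict v) := by
    rw [orthonormal_iff_ite]
    rintro ⟨i, hi, hpi⟩ ⟨j, hj, hpj⟩
    have hsi : 0 < √(p ⟨i, hi⟩) := Real.sqrt_pos.2 ((hp _).lt_of_ne' hpi)
    have : inner ℂ (v i) (v j) = ((√(p ⟨i, hi⟩) : ℝ) : ℂ)⁻¹ * ((√(p ⟨j, hj⟩) : ℝ) : ℂ)⁻¹ *
        ∑ k, star (B k ⟨i, hi⟩) * B k ⟨j, hj⟩ := by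
      simp only [v, hi, hj, dif_pos, PiLp.inner_apply, Finset.mul_sum]
      refine Finset.sum_congr rfl fun k _ => ?_
      simp
      ring
    change inner ℂ (v i) (v j) = _
    rw [this, hBe]
    by_cases hij : i = j
    · subst hij
      simp
      have : (p ⟨i, hi⟩ : ℂ) = ((√(p ⟨i, hi⟩) : ℝ) : ℂ) * ((√(p ⟨i, hi⟩) : ℝ) : ℂ) := by
        rw [← Complex.ofReal_mul, Real.mul_self_sqrt (hp _)]
      rw [this]
      have : ((√(p ⟨i, hi⟩) : ℝ) : ℂ) ≠ 0 := by exact_mod_cast hsi.ne'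
      field_simp
    · have : (i : ℕ) ≠ j := fun h => hij (Fin.ext h)
      simp [hij, this]
  obtain ⟨w, hw⟩ := hv.exists_orthonormalBasis_extension_of_card_eq (by simp)
  refine ⟨Matrix.of fun i j => w j i, ?_, ?_⟩
  · exact (EuclideanSpace.basisFun (Fin b) ℂ).toMatrix_orthonormalBasis_mem_unitary w
  · ext i j
    rw [mul_diagonal]
    simp only [submatrix_apply, id, of_apply]
    by_cases hj : p j = 0
    · have h1 := hBe j j
      rw [if_pos rfl, hj] at h1
      have h2 : ∑ k, Complex.normSq (B k j) = 0 := by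
        have h3 : ∀ k, star (B k j) * B k j = (Complex.normSq (B k j) : ℂ) := fun k =>
          Complex.normSq_eq_conj_mul_self.symm
        simp only [h3] at h1
        exact_mod_cast h1
      rw [Finset.sum_eq_zero_iff_of_nonneg (fun _ _ => Complex.normSq_nonneg _)] at h2
      have := Complex.normSq_eq_zero.1 (h2 i (Finset.mem_univ _))
      simp [this, hj]
    · have hsi : 0 < √(p j) := Real.sqrt_pos.2 ((hp _).lt_of_ne' hj)
      have : ((√(p j) : ℝ) : ℂ) ≠ 0 := by exact_mod_cast hsi.ne'
      rw [hw (Fin.castLE h j) ⟨j.2, hj⟩]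
      simp [v]
      field_simp

theorem aux_pure {n : Type*} [Fintype n] [DecidableEq n] (ρ : Matrix n n ℂ)
    (hρ : DensityMatrix ρ) (hr : ρ.rank = 1) :
    ∃ v : n → ℂ, star v ⬝ᵥ v = 1 ∧ ρ = vecMulVec v (star v) := by
  obtain ⟨hP, ht⟩ := hρ
  have hH := hP.1
  rw [hH.rank_eq_card_non_zero_eigs, Fintype.card_eq_one_iff] at hr
  obtain ⟨⟨i0, hi0⟩, hu⟩ := hr
  have hz : ∀ i, i ≠ i0 → hH.eigenvalues i = 0 := by
    intro i hi
    by_contra hne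
    exact hi (congrArg Subtype.val (hu ⟨i, hne⟩))
  have h1 : hH.eigenvalues i0 = 1 := by
    rw [aux_trace hH, Finset.sum_eq_single i0 (fun i _ hi => by simp [hz i hi])
      (by simp)] at ht
    exact_mod_cast ht
  have hU := (Matrix.mem_unitaryGroup_iff'.1 hH.eigenvectorUnitary.2)
  set Q : Matrix n n ℂ := hH.eigenvectorUnitary.1 with hQ
  have hρe : ρ = vecMulVec (fun i => Q i i0) (star fun i => Q i i0) := by
    have := hH.spectral_theorem
    rw [Unitary.conjStarAlgAut_apply] at this
    conv_lhs => rw [this]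
    ext i j
    rw [Matrix.mul_apply, Finset.sum_eq_single i0]
    · simp [mul_diagonal, h1, vecMulVec_apply, star_apply, Q]
    · intro k _ hk
      simp [mul_diagonal, hz k hk]
    · simp
  refine ⟨fun i => Q i i0, ?_, hρe⟩
  have := congrFun (congrFun hU i0) i0
  simpa [Matrix.mul_apply, dotProduct, star_apply] using this

theorem aux_overlap {a b : ℕ} (h : a ≤ b) (V : Matrix (Fin a) (Fin b) ℂ)
    (hH : (V * Vᴴ).IsHermitian) (hp : ∀ i, 0 ≤ hH.eigenvalues i) :
    ∃ W ∈ Matrix.unitaryGroup (Fin b) ℂ,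
      ∑ i, (V * W) i (Fin.castLE h i) = ((∑ i, √(hH.eigenvalues i) : ℝ) : ℂ) := by
  have hU := (Matrix.mem_unitaryGroup_iff'.1 hH.eigenvectorUnitary.2)
  have hU' := (Matrix.mem_unitaryGroup_iff.1 hH.eigenvectorUnitary.2)
  have hs := hH.conjStarAlgAut_star_eigenvectorUnitary
  rw [Unitary.conjStarAlgAut_star_apply] at hs
  set p := hH.eigenvalues
  set Q : Matrix (Fin a) (Fin a) ℂ := hH.eigenvectorUnitary.1 with hQ
  rw [star_eq_conjTranspose] at hU hU' hs
  let E : Matrix (Fin b) (Fin a) ℂ := (1 : Matrix (Fin b) (Fin b) ℂ).submatrix id (Fin.castLE h)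
  have hE : Eᴴ * E = 1 := by
    ext i j
    simp [E, Matrix.mul_apply, Matrix.one_apply, apply_ite]
  have hWE : ∀ {m : ℕ} (W : Matrix (Fin m) (Fin b) ℂ), W.submatrix id (Fin.castLE h) = W * E := by
    intro m W
    ext i j
    simp [E, Matrix.mul_apply, Matrix.one_apply]
  obtain ⟨W, hW, hW2⟩ := aux_complete h (Vᴴ * Q) p hp (by
    rw [conjTranspose_mul, conjTranspose_conjTranspose, Matrix.mul_assoc, ← Matrix.mul_assoc V,
      ← Matrix.mul_assoc]
    exact hs)
  obtain ⟨G, hG, hG2⟩ := aux_complete h (E * Q) (fun _ => 1) (by simp) (by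
    rw [conjTranspose_mul, Matrix.mul_assoc, ← Matrix.mul_assoc _ E, hE, Matrix.one_mul, hU]
    simp)
  rw [hWE] at hW2 hG2
  simp at hG2
  set D := diagonal (fun i => ((√(p i) : ℝ) : ℂ)) with hD
  have hDH : Dᴴ = D := by
    rw [hD, diagonal_conjTranspose]
    congr 1
    ext i
    simp
  have hV : V = Q * D * Eᴴ * Wᴴ := by
    have h1 : Vᴴ = W * E * D * Qᴴ := by
      rw [← hW2, Matrix.mul_assoc, hU', Matrix.mul_one]
    rw [← conjTranspose_conjTranspose V, h1]
    simp [conjTranspose_mul, hDH, Matrix.mul_assoc]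
  refine ⟨W * Gᴴ, mul_mem hW (Unitary.star_mem hG), ?_⟩
  have e1 : ∑ i, (V * (W * Gᴴ)) i (Fin.castLE h i) = (V * (W * Gᴴ) * E).trace := by
    rw [← hWE]; rfl
  have hWW : Wᴴ * W = 1 := Matrix.mem_unitaryGroup_iff'.1 hW
  have e2 : V * (W * Gᴴ) * E = Q * D * Qᴴ := by
    calc V * (W * Gᴴ) * E = Q * D * Eᴴ * (Wᴴ * W) * Gᴴ * E := by
          rw [hV]; simp only [Matrix.mul_assoc]
      _ = Q * D * (G * E)ᴴ * E := by
          rw [hWW, conjTranspose_mul]; simp only [Matrix.mul_assoc, Matrix.one_mul]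
      _ = Q * D * Qᴴ * (Eᴴ * E) := by
          rw [← hG2, conjTranspose_mul]; simp only [Matrix.mul_assoc]
      _ = _ := by rw [hE, Matrix.mul_one]
  rw [e1, e2, Matrix.mul_assoc, trace_mul_comm, Matrix.mul_assoc, hU, Matrix.mul_one, hD,
    trace_diagonal]
  simp

/-- a pure state whose reduced entropy is at least `(1 − ε) log₂ d_A`
is within trace distance `(2 ε ln d_A)^{1/4}` of the maximally entangled state, up to a
local unitary on `B`. -/
theorem stmt3 {dA dB : ℕ} (hdA : 1 ≤ dA) (hdAB : dA ≤ dB) (ε : ℝ) (hε : ε ∈ Set.Ioo (0:ℝ) 1)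
    (ψ : Matrix (Fin dA × Fin dB) (Fin dA × Fin dB) ℂ)
    (hψ : DensityMatrix ψ) (hpure : ψ.rank = 1)
    (hS : (1 - ε) * Real.logb 2 dA ≤ entropy (ptraceR ψ)) :
    ∃ U : Matrix (Fin dB) (Fin dB) ℂ, U ∈ Matrix.unitaryGroup (Fin dB) ℂ ∧
      (1/2) * traceNorm
        (((1 : Matrix (Fin dA) (Fin dA) ℂ) ⊗ₖ U) * ψ *
            (((1 : Matrix (Fin dA) (Fin dA) ℂ) ⊗ₖ U))ᴴ - maxEnt dA dB)
        ≤ (2 * ε * Real.log dA) ^ ((1:ℝ)/4) := by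
  obtain ⟨v, hv1, rfl⟩ := aux_pure ψ hψ hpure
  let V : Matrix (Fin dA) (Fin dB) ℂ := Matrix.of fun i k => v (i, k)
  have hpt : ptraceR (vecMulVec v (star v)) = V * Vᴴ := by
    ext i j
    simp [ptraceR, V, Matrix.mul_apply, vecMulVec_apply]
  have hP := Matrix.posSemidef_self_mul_conjTranspose V
  have hH := hP.1
  rw [hpt, entropy, dif_pos hH] at hS
  have hnn : ∀ i, 0 ≤ hH.eigenvalues i := hP.eigenvalues_nonneg
  have hn0 : (0:ℝ) < dA := by exact_mod_cast hdA
  have hsum : ∑ i, hH.eigenvalues i = 1 := by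
    have h1 : (V * Vᴴ).trace = 1 := by
      rw [← hv1]
      simp [Matrix.trace, Matrix.mul_apply, V, dotProduct, Fintype.sum_prod_type, mul_comm]
    rw [aux_trace hH] at h1
    exact_mod_cast h1
  have hsc := aux_scalar hdA _ hnn hsum
  obtain ⟨W, hW, hWt⟩ := aux_overlap hdAB V hH hnn
  set F : ℝ := (∑ i, √(hH.eigenvalues i)) / √dA with hF
  have hlog2 : 0 < Real.log 2 := Real.log_pos (by norm_num)
  have hD : 1 - F ^ 2 ≤ ε * Real.log dA := by
    rw [Real.logb, ← mul_div_assoc, div_le_div_iff_of_pos_right hlog2] at hS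
    linarith
  have hWu : W * Wᴴ = 1 := Matrix.mem_unitaryGroup_iff.1 hW
  have hWu' : Wᴴ * W = 1 := Matrix.mem_unitaryGroup_iff'.1 hW
  have hUu : Wᵀᴴ * Wᵀ = 1 := by
    rw [← transpose_one, ← hWu]
    ext i j
    simp [Matrix.mul_apply, mul_comm]
  refine ⟨Wᵀ, Matrix.mem_unitaryGroup_iff'.2 hUu, ?_⟩
  set K := (1 : Matrix (Fin dA) (Fin dA) ℂ) ⊗ₖ Wᵀ with hK
  have hKK : Kᴴ * K = 1 := by
    rw [hK, conjTranspose_kronecker, ← mul_kronecker_mul, hUu]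
    simp
  let y : Fin dA × Fin dB → ℂ := fun q => if (q.2 : ℕ) = (q.1 : ℕ) then ((√dA : ℝ) : ℂ)⁻¹ else 0
  have hsq : (((√dA : ℝ) : ℂ))⁻¹ * (((√dA : ℝ) : ℂ))⁻¹ = (dA : ℂ)⁻¹ := by
    rw [← mul_inv, ← Complex.ofReal_mul, Real.mul_self_sqrt hn0.le]; simp
  have hmax : maxEnt dA dB = vecMulVec y (star y) := by
    ext q r
    simp only [maxEnt, of_apply, vecMulVec_apply, y, Pi.star_apply]
    by_cases h1 : (q.2 : ℕ) = q.1 <;> by_cases h2 : (r.2 : ℕ) = r.1 <;> simp [h1, h2, ← hsq]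
  have hconj : K * vecMulVec v (star v) * Kᴴ = vecMulVec (K *ᵥ v) (star (K *ᵥ v)) := by
    rw [mul_vecMulVec, vecMulVec_mul, star_mulVec]
  have hx1 : star (K *ᵥ v) ⬝ᵥ (K *ᵥ v) = 1 := by
    rw [star_mulVec, dotProduct_mulVec, vecMul_vecMul, hKK, vecMul_one, hv1]
  have hysum : ∀ f : Fin dA × Fin dB → ℂ,
      star y ⬝ᵥ f = ((√dA : ℝ) : ℂ)⁻¹ * ∑ i, f (i, Fin.castLE hdAB i) := by
    intro f
    rw [dotProduct, Fintype.sum_prod_type, Finset.mul_sum]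
    refine Finset.sum_congr rfl fun i _ => ?_
    rw [Finset.sum_eq_single (Fin.castLE hdAB i)]
    · simp [y]
    · intro k _ hk
      have : (k : ℕ) ≠ i := fun h => hk (Fin.ext h)
      simp [y, this]
    · simp
  have hsn : ((√dA : ℝ) : ℂ) ≠ 0 := by
    exact_mod_cast (Real.sqrt_pos.2 hn0).ne'
  have hy1 : star y ⬝ᵥ y = 1 := by
    rw [hysum]
    have hd : (dA : ℂ) ≠ 0 := by exact_mod_cast hn0.ne'
    simp only [y, Fin.val_castLE, if_true, Finset.sum_const, Finset.card_univ, Fintype.card_fin,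
      nsmul_eq_mul]
    rw [mul_left_comm, hsq, mul_inv_cancel₀ hd]
  have hyx : star y ⬝ᵥ (K *ᵥ v) = (F : ℂ) := by
    have h1 : ∀ i j, (K *ᵥ v) (i, j) = (V * W) i j := by
      intro i j
      simp [hK, mulVec, dotProduct, Fintype.sum_prod_type, Matrix.mul_apply, V,
        Matrix.one_apply, mul_comm]
    rw [hysum]
    simp only [h1]
    rw [hWt, hF, Complex.ofReal_div]
    field_simp
  rw [hconj, hmax]
  have hT := aux_traceNorm _ _ F hx1 hy1 hyx
  have hT2 : (1/2) * traceNorm (vecMulVec (K *ᵥ v) (star (K *ᵥ v)) - vecMulVec y (star y))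
      ≤ √(1 - F ^ 2) := by linarith
  refine hT2.trans ?_
  have hx0 : 0 ≤ ε * Real.log dA := mul_nonneg hε.1.le (Real.log_nonneg (by exact_mod_cast hdA))
  have hA : (√(1 - F ^ 2)) ^ 4 ≤ 2 * ε * Real.log dA := by
    rcases le_or_gt (1 - F ^ 2) 0 with h0 | h0
    · rw [Real.sqrt_eq_zero_of_nonpos h0]; simp; nlinarith
    · have : (√(1 - F ^ 2)) ^ 4 = (1 - F ^ 2) ^ 2 := by
        rw [show (4:ℕ) = 2 * 2 from rfl, pow_mul, Real.sq_sqrt h0.le]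
      rw [this]
      nlinarith [sq_nonneg F]
  calc √(1 - F ^ 2) = ((√(1 - F ^ 2)) ^ 4) ^ ((1:ℝ)/4) := by
        rw [← Real.rpow_natCast (√(1 - F ^ 2)) 4, ← Real.rpow_mul (Real.sqrt_nonneg _)]; norm_num
    _ ≤ _ := Real.rpow_le_rpow (by positivity) hA (by norm_num)
end
end

section
/- Let J and G be finite sets, d_A, d_B ≥ 1, and let {L^j}_{j∈J} be d_B × d_A complex matrices with ∑_j (L^j)† L^j = 1_{d_A} (Kraus operators of a quantum channel M(X) = ∑_j L^j X (L^j)†). Suppose that for each g ∈ G there are unitaries U^g on ℂ^{d_A} and V^g on ℂ^{d_B} such that M(U^g X (U^g)†) = V^g M(X) (V^g)† for every d_A × d_A matrix X (covariance of the channel). Let U^M : ℂ^{d_A} → ℂ^{d_B} ⊗ ℂ^{|J|} be the canonical isometric extension U^M = ∑_j L^j ⊗ |j⟩, i.e. the matrix with entries (U^M)_{(b,j),a} = (L^j)_{b,a}. Then for every g ∈ G there exists a unitary W^g on ℂ^{|J|} such that U^M U^g = (V^g ⊗ W^g) U^M. -/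
open Matrix Kronecker
open scoped ComplexOrder

noncomputable section

theorem aux_iso {J K : Type*} [Fintype J] [DecidableEq J] [Fintype K] [DecidableEq K]
    (A B : Matrix J K ℂ) (h : Aᴴ * A = Bᴴ * B) :
    ∃ W : Matrix J J ℂ, W ∈ Matrix.unitaryGroup J ℂ ∧ A = W * B := by
  let f (M : Matrix J K ℂ) : (K → ℂ) →ₗ[ℂ] EuclideanSpace ℂ J :=
    (WithLp.linearEquiv 2 ℂ (J → ℂ)).symm.toLinearMap ∘ₗ M.mulVecLin
  have hf : ∀ M x, f M x = WithLp.toLp 2 (M *ᵥ x) := fun M x => rfl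
  have hin : ∀ M x, inner ℂ (f M x) (f M x) = star x ⬝ᵥ ((Mᴴ * M) *ᵥ x) := by
    intro M x
    rw [hf, EuclideanSpace.inner_toLp_toLp, dotProduct_comm, star_mulVec,
      ← mulVec_mulVec, dotProduct_mulVec (star x)]
  have hnorm : ∀ x, ‖f A x‖ = ‖f B x‖ := by
    intro x
    rw [@norm_eq_sqrt_re_inner ℂ, @norm_eq_sqrt_re_inner ℂ, hin, hin, h]
  obtain ⟨g, hg⟩ := (f B).rangeRestrict.exists_rightInverse_of_surjective
    (LinearMap.range_rangeRestrict _)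
  have hg' : ∀ y, f B (g y) = y := fun y => by
    have := congrArg Subtype.val (LinearMap.congr_fun hg y)
    simpa using this
  let T0 : LinearMap.range (f B) →ₗᵢ[ℂ] EuclideanSpace ℂ J :=
    { toLinearMap := f A ∘ₗ g
      norm_map' := fun y => by
        rw [LinearMap.comp_apply, hnorm, hg']; rfl }
  have hT0 : ∀ x, T0.extend (f B x) = f A x := by
    intro x
    have h1 := T0.extend_apply ⟨f B x, LinearMap.mem_range_self _ x⟩
    have h2 : T0 ⟨f B x, LinearMap.mem_range_self _ x⟩
      = f A (g ⟨f B x, LinearMap.mem_range_self _ x⟩) := rfl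
    have h3 : f A (g ⟨f B x, LinearMap.mem_range_self _ x⟩ - x) = 0 := by
      rw [← norm_eq_zero, hnorm, map_sub, hg', sub_self, norm_zero]
    rw [map_sub, sub_eq_zero] at h3
    exact h1.trans (h2.trans h3)
  let T := T0.extend
  refine ⟨Matrix.of fun i j => T (EuclideanSpace.single j 1) i, ?_, ?_⟩
  · rw [Matrix.mem_unitaryGroup_iff']
    ext i j
    have h1 := T.inner_map_map (EuclideanSpace.single i 1) (EuclideanSpace.single j 1)
    rw [PiLp.inner_apply] at h1
    simp only [RCLike.inner_apply] at h1
    rw [star_eq_conjTranspose, Matrix.mul_apply]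
    simp only [conjTranspose_apply, of_apply]
    rw [Matrix.one_apply]
    simp only [RCLike.star_def]
    rw [Finset.sum_congr rfl fun x _ => mul_comm _ _, h1]
    simp [EuclideanSpace.inner_single_left, Pi.single_apply]
  · ext i k
    have h1 := hT0 (Pi.single k 1)
    have h2 : f B (Pi.single k 1) = ∑ j, B j k • EuclideanSpace.single j (1 : ℂ) := by
      ext j
      simp [hf, Pi.single_apply]
    rw [h2, map_sum] at h1
    have h3 := congrArg (fun v : EuclideanSpace ℂ J => v i) h1
    simp [hf] at h3
    rw [Matrix.mul_apply, ← h3]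
    simp [T, mul_comm]

/-- for a covariant channel with Kraus operators `{L^j}`, the canonical
isometric extension `U^M = ∑_j L^j ⊗ |j⟩` satisfies `U^M U^g = (V^g ⊗ W^g) U^M` for some
unitary `W^g` on the environment. -/
theorem stmt4 {J G : Type*} [Fintype J] [DecidableEq J] [Fintype G] {dA dB : ℕ}
    (L : J → Matrix (Fin dB) (Fin dA) ℂ)
    (hL : ∑ j, (L j)ᴴ * L j = (1 : Matrix (Fin dA) (Fin dA) ℂ))
    (U : G → Matrix (Fin dA) (Fin dA) ℂ) (V : G → Matrix (Fin dB) (Fin dB) ℂ)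
    (hU : ∀ g, U g ∈ Matrix.unitaryGroup (Fin dA) ℂ)
    (hV : ∀ g, V g ∈ Matrix.unitaryGroup (Fin dB) ℂ)
    (hcov : ∀ (g : G) (X : Matrix (Fin dA) (Fin dA) ℂ),
      ∑ j, L j * (U g * X * (U g)ᴴ) * (L j)ᴴ
        = V g * (∑ j, L j * X * (L j)ᴴ) * (V g)ᴴ) :
    ∀ g : G, ∃ W : Matrix J J ℂ, W ∈ Matrix.unitaryGroup J ℂ ∧
      (Matrix.of fun (p : Fin dB × J) (a : Fin dA) => L p.2 p.1 a) * U g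
        = ((V g) ⊗ₖ W) * (Matrix.of fun (p : Fin dB × J) (a : Fin dA) => L p.2 p.1 a) := by
  classical
  intro g
  let A : Matrix J (Fin dB × Fin dA) ℂ := Matrix.of fun j p => (L j * U g) p.1 p.2
  let B : Matrix J (Fin dB × Fin dA) ℂ := Matrix.of fun j p => (V g * L j) p.1 p.2
  have key : ∀ (M : Matrix (Fin dB) (Fin dA) ℂ) (b b' : Fin dB) (a a' : Fin dA),
      (M * Matrix.single a a' (1 : ℂ) * Mᴴ) b b' = M b a * star (M b' a') := by
    intro M b b' a a'
    rw [Matrix.mul_apply, Finset.sum_eq_single a']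
    · simp
    · intro c _ hc
      rw [Matrix.mul_single_apply_of_ne _ _ _ _ _ hc, zero_mul]
    · simp
  obtain ⟨W, hW, hAB⟩ := aux_iso A B (by
    ext ⟨b', a'⟩ ⟨b, a⟩
    have h1 := hcov g (Matrix.single a a' (1 : ℂ))
    have h2 : ∑ j, (L j * U g) * Matrix.single a a' (1 : ℂ) * (L j * U g)ᴴ
        = ∑ j, (V g * L j) * Matrix.single a a' (1 : ℂ) * (V g * L j)ᴴ := by
      simp only [Matrix.mul_sum, Matrix.sum_mul] at h1
      simpa only [conjTranspose_mul, Matrix.mul_assoc] using h1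
    have h3 := congrFun (congrFun h2 b) b'
    simp only [Matrix.sum_apply, key] at h3
    simp only [Matrix.mul_apply, conjTranspose_apply, A, B, of_apply] at h3 ⊢
    simpa only [mul_comm] using h3)
  refine ⟨W, hW, ?_⟩
  ext ⟨b, j⟩ a
  have h1 := congrFun (congrFun hAB j) (b, a)
  simp only [Matrix.mul_apply, A, B, of_apply] at h1
  simp only [Matrix.mul_apply, of_apply, kroneckerMap_apply, Fintype.sum_prod_type]
  rw [h1, Finset.sum_comm]
  refine Finset.sum_congr rfl fun j' _ => ?_
  rw [Finset.mul_sum]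
  refine Finset.sum_congr rfl fun b' _ => ?_
  ring
end
end

section
/- Let G, H be finite sets and let N be a bipartite quantum channel from matrices on ℂ^a ⊗ ℂ^b to matrices on ℂ^{a_o} ⊗ ℂ^{b_o}. Suppose given unitaries U^g on ℂ^a (g ∈ G) and V^h on ℂ^b (h ∈ H) forming unitary one-designs, i.e. (1/|G|) ∑_g U^g X (U^g)† = (Tr X)·1_a/a for every a×a matrix X and (1/|H|) ∑_h V^h Y (V^h)† = (Tr Y)·1_b/b for every b×b matrix Y, and unitaries W^{g,h} on ℂ^{a_o} and T^{g,h} on ℂ^{b_o} such that N((U^g ⊗ V^h) ρ (U^g ⊗ V^h)†) = (W^{g,h} ⊗ T^{g,h}) N(ρ) (W^{g,h} ⊗ T^{g,h})† for all ρ, g, h (bicovariance). Let θ be the state on L_A ⊗ A_o ⊗ B_o ⊗ L_B obtained by applying N to the input factors of Φ_{L_A A'} ⊗ Φ_{B' L_B}, where L_A ≅ ℂ^a, L_B ≅ ℂ^b and Φ denotes a maximally entangled state of full Schmidt rank; define E^g = (a²/|G|)·(U^g ⊗ 1_{L_A}) Φ_{A'' L_A} (U^g ⊗ 1_{L_A})†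 on A'' ⊗ L_A (A'' ≅ ℂ^a) and F^h = (b²/|H|)·(V^h ⊗ 1_{L_B}) Φ_{B'' L_B} (V^h ⊗ 1_{L_B})† on B'' ⊗ L_B (B'' ≅ ℂ^b). Then for every density matrix ρ on A'' ⊗ B'' and all g ∈ G, h ∈ H: |G|·|H|·Tr_{A'' L_A B'' L_B}[ (E^g ⊗ F^h ⊗ 1_{A_o B_o}) (ρ ⊗ θ) ] = (W^{g,h} ⊗ T^{g,h})† N(ρ) (W^{g,h} ⊗ T^{g,h}); that is, a bicovariant channel is teleportation-simulable with its Choi state θ as resource. -/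
open Matrix Kronecker
open scoped ComplexOrder

noncomputable section

/-- Partial trace over the first tensor factor. -/
def ptraceL {X Y : Type*} [Fintype X] (M : Matrix (X × Y) (X × Y) ℂ) : Matrix Y Y ℂ :=
  Matrix.of fun i j => ∑ k, M (k, i) (k, j)

/-- The maximally entangled state of Schmidt rank `d` on `ℂ^d ⊗ ℂ^d`. -/
def maxEntSq (d : ℕ) : Matrix (Fin d × Fin d) (Fin d × Fin d) ℂ :=
  Matrix.of fun p q => if p.2 = p.1 ∧ q.2 = q.1 then ((d : ℂ))⁻¹ else 0

/-- Reordering `(A'' L_A B'' L_B)(A_o B_o) ≃ (A'' B'')(L_A A_o B_o L_B)`. -/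
def teleEquiv (A'' LA B'' LB Ao Bo : Type*) :
    (((A'' × LA) × (B'' × LB)) × (Ao × Bo)) ≃ ((A'' × B'') × ((LA × Ao) × (Bo × LB))) where
  toFun x := ((x.1.1.1, x.1.2.1), ((x.1.1.2, x.2.1), (x.2.2, x.1.2.2)))
  invFun y := (((y.1.1, y.2.1.1), (y.1.2, y.2.2.2)), (y.2.1.2, y.2.2.1))
  left_inv _ := rfl
  right_inv _ := rfl

lemma tele_E (d : ℕ) (U : Matrix (Fin d) (Fin d) ℂ) (x l x' l' : Fin d) :
    ((U ⊗ₖ (1 : Matrix (Fin d) (Fin d) ℂ)) * maxEntSq d *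
      ((U ⊗ₖ (1 : Matrix (Fin d) (Fin d) ℂ)))ᴴ) (x, l) (x', l')
      = (d : ℂ)⁻¹ * (U x l * star (U x' l')) := by
  have h1 : ∀ q : Fin d × Fin d,
      ((U ⊗ₖ (1 : Matrix (Fin d) (Fin d) ℂ)) * maxEntSq d) (x, l) q
      = if q.2 = q.1 then (d : ℂ)⁻¹ * U x l else 0 := by
    intro q
    rw [Matrix.mul_apply, Fintype.sum_prod_type]
    simp only [kroneckerMap_apply, maxEntSq, Matrix.of_apply, Matrix.one_apply]
    by_cases hq : q.2 = q.1
    · simp [hq, mul_comm]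
    · simp [hq]
  rw [Matrix.mul_apply, Fintype.sum_prod_type]
  simp only [h1, conjTranspose_apply, kroneckerMap_apply, Matrix.one_apply]
  simp [mul_assoc, apply_ite]

lemma tele_N {m n : Type*} [Fintype m] [DecidableEq m]
    (N : Matrix m m ℂ →ₗ[ℂ] Matrix n n ℂ) (X : Matrix m m ℂ) (i j : n) :
    N X i j = ∑ p, ∑ q, X p q * N (Matrix.single p q 1) i j := by
  conv_lhs => rw [Matrix.matrix_eq_sum_single X]
  simp only [map_sum, Matrix.sum_apply]
  refine Finset.sum_congr rfl fun p _ => Finset.sum_congr rfl fun q _ => ?_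
  have : Matrix.single p q (X p q) = X p q • Matrix.single p q (1:ℂ) := by
    simp [Matrix.smul_single]
  rw [this, map_smul, Matrix.smul_apply, smul_eq_mul]

lemma tele_theta {a b ao bo : ℕ}
    (N : Matrix (Fin a × Fin b) (Fin a × Fin b) ℂ →ₗ[ℂ]
      Matrix (Fin ao × Fin bo) (Fin ao × Fin bo) ℂ)
    (l l' : Fin a) (m m' : Fin b) (o o' : Fin ao) (p p' : Fin bo) :
    extendChannel N (maxEntSq a ⊗ₖ maxEntSq b) ((l, o), (p, m)) ((l', o'), (p', m'))
      = (a : ℂ)⁻¹ * (b : ℂ)⁻¹ * N (Matrix.single (l, m) (l', m') 1) (o, p) (o', p') := by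
  have : (Matrix.of fun (xy x'y' : Fin a × Fin b) =>
        (maxEntSq a ⊗ₖ maxEntSq b) ((l, xy.1), (xy.2, m)) ((l', x'y'.1), (x'y'.2, m')))
      = ((a : ℂ)⁻¹ * (b : ℂ)⁻¹) • Matrix.single (l, m) (l', m') (1:ℂ) := by
    ext ⟨x, y⟩ ⟨x', y'⟩
    simp only [kroneckerMap_apply, maxEntSq, Matrix.of_apply, Matrix.smul_apply,
      Matrix.single_apply, Prod.mk.injEq, smul_eq_mul]
    by_cases h1 : x = l <;> by_cases h2 : x' = l' <;> by_cases h3 : m = y <;>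
      by_cases h4 : m' = y' <;> simp [h1, h2, h3, h4, eq_comm] <;> grind
  simp only [extendChannel, Matrix.of_apply]
  rw [this, map_smul, Matrix.smul_apply, smul_eq_mul]

lemma tele_reorder {A B : Type*} [Fintype A] [Fintype B]
    (f : A → A → B → B → A → A → B → B → ℂ) :
    (∑ x, ∑ l, ∑ y, ∑ m, ∑ x', ∑ l', ∑ y', ∑ m', f x l y m x' l' y' m')
      = ∑ l', ∑ m', ∑ l, ∑ m, ∑ x, ∑ y, ∑ x', ∑ y', f x l y m x' l' y' m' := by
  have := Fintype.sum_equiv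
    ({ toFun := fun (x, l, y, m, x', l', y', m') => (l', m', l, m, x, y, x', y')
       invFun := fun (l', m', l, m, x, y, x', y') => (x, l, y, m, x', l', y', m')
       left_inv := fun _ => rfl
       right_inv := fun _ => rfl } :
      A × A × B × B × A × A × B × B ≃ A × B × A × B × A × B × A × B)
    (fun (x, l, y, m, x', l', y', m') => f x l y m x' l' y' m')
    (fun (l', m', l, m, x, y, x', y') => f x l y m x' l' y' m') (fun _ => rfl)
  simpa only [Fintype.sum_prod_type] using this

/-- a bicovariant bipartite channel is teleportation-simulable with its Choi
state `θ = (id ⊗ N ⊗ id)(Φ_{L_A A'} ⊗ Φ_{B' L_B})` as resource state: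
`|G||H| Tr_{A'' L_A B'' L_B}[(E^g ⊗ F^h ⊗ 1)(ρ ⊗ θ)] = (W^{g,h} ⊗ T^{g,h})† N(ρ) (W^{g,h} ⊗ T^{g,h})`. -/
theorem stmt5 {a b ao bo : ℕ} {G H : Type*} [Fintype G] [Fintype H]
    (N : Matrix (Fin a × Fin b) (Fin a × Fin b) ℂ →ₗ[ℂ]
      Matrix (Fin ao × Fin bo) (Fin ao × Fin bo) ℂ)
    (hN : IsQuantumChannel N)
    (U : G → Matrix (Fin a) (Fin a) ℂ) (V : H → Matrix (Fin b) (Fin b) ℂ)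
    (Wm : G → H → Matrix (Fin ao) (Fin ao) ℂ) (Tm : G → H → Matrix (Fin bo) (Fin bo) ℂ)
    (hU : ∀ g, U g ∈ Matrix.unitaryGroup (Fin a) ℂ)
    (hV : ∀ h, V h ∈ Matrix.unitaryGroup (Fin b) ℂ)
    (hW : ∀ g h, Wm g h ∈ Matrix.unitaryGroup (Fin ao) ℂ)
    (hT : ∀ g h, Tm g h ∈ Matrix.unitaryGroup (Fin bo) ℂ)
    (hUdesign : ∀ X : Matrix (Fin a) (Fin a) ℂ,
      ((Fintype.card G : ℂ))⁻¹ • ∑ g, U g * X * (U g)ᴴ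
        = (X.trace / (a : ℂ)) • (1 : Matrix (Fin a) (Fin a) ℂ))
    (hVdesign : ∀ Y : Matrix (Fin b) (Fin b) ℂ,
      ((Fintype.card H : ℂ))⁻¹ • ∑ h, V h * Y * (V h)ᴴ
        = (Y.trace / (b : ℂ)) • (1 : Matrix (Fin b) (Fin b) ℂ))
    (hcov : ∀ (ρ : Matrix (Fin a × Fin b) (Fin a × Fin b) ℂ) (g : G) (h : H),
      N ((U g ⊗ₖ V h) * ρ * ((U g ⊗ₖ V h))ᴴ)
        = (Wm g h ⊗ₖ Tm g h) * N ρ * ((Wm g h ⊗ₖ Tm g h))ᴴ) :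
    ∀ (ρ : Matrix (Fin a × Fin b) (Fin a × Fin b) ℂ), DensityMatrix ρ →
    ∀ (g : G) (h : H),
      ((Fintype.card G : ℂ) * (Fintype.card H : ℂ)) •
        ptraceL
          (((((((a : ℂ) ^ 2 / (Fintype.card G : ℂ)) •
                  ((U g ⊗ₖ (1 : Matrix (Fin a) (Fin a) ℂ)) * maxEntSq a *
                    ((U g ⊗ₖ (1 : Matrix (Fin a) (Fin a) ℂ)))ᴴ)) ⊗ₖ
                (((b : ℂ) ^ 2 / (Fintype.card H : ℂ)) •
                  ((V h ⊗ₖ (1 : Matrix (Fin b) (Fin b) ℂ)) * maxEntSq b *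
                    ((V h ⊗ₖ (1 : Matrix (Fin b) (Fin b) ℂ)))ᴴ))) ⊗ₖ
              (1 : Matrix (Fin ao × Fin bo) (Fin ao × Fin bo) ℂ)) *
            ((ρ ⊗ₖ extendChannel N (maxEntSq a ⊗ₖ maxEntSq b)).submatrix
              (teleEquiv (Fin a) (Fin a) (Fin b) (Fin b) (Fin ao) (Fin bo))
              (teleEquiv (Fin a) (Fin a) (Fin b) (Fin b) (Fin ao) (Fin bo)))))
        = ((Wm g h ⊗ₖ Tm g h))ᴴ * N ρ * (Wm g h ⊗ₖ Tm g h) := by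
  intro ρ hρ g h
  have hG : (Fintype.card G : ℂ) ≠ 0 := by
    have : Nonempty G := ⟨g⟩
    exact_mod_cast Fintype.card_ne_zero
  have hH : (Fintype.card H : ℂ) ≠ 0 := by
    have : Nonempty H := ⟨h⟩
    exact_mod_cast Fintype.card_ne_zero
  have hb : (b : ℂ) ≠ 0 := by
    rintro hb
    have : b = 0 := by exact_mod_cast hb
    subst this
    simpa [Matrix.trace] using hρ.2
  have ha : (a : ℂ) ≠ 0 := by
    rintro ha
    have : a = 0 := by exact_mod_cast ha
    subst this
    simpa [Matrix.trace] using hρ.2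
  have hUV : (U g ⊗ₖ V h) * (U g ⊗ₖ V h)ᴴ = 1 := by
    rw [conjTranspose_kronecker, ← mul_kronecker_mul, ← star_eq_conjTranspose,
      ← star_eq_conjTranspose, (mem_unitaryGroup_iff).1 (hU g), (mem_unitaryGroup_iff).1 (hV h),
      one_kronecker_one]
  have hWT : (Wm g h ⊗ₖ Tm g h)ᴴ * (Wm g h ⊗ₖ Tm g h) = 1 := by
    rw [conjTranspose_kronecker, ← mul_kronecker_mul, ← star_eq_conjTranspose,
      ← star_eq_conjTranspose, (mem_unitaryGroup_iff').1 (hW g h),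
      (mem_unitaryGroup_iff').1 (hT g h), one_kronecker_one]
  have key : (Wm g h ⊗ₖ Tm g h)ᴴ * N ρ * (Wm g h ⊗ₖ Tm g h)
      = N ((U g ⊗ₖ V h)ᴴ * ρ * (U g ⊗ₖ V h)) := by
    have h1 := hcov ((U g ⊗ₖ V h)ᴴ * ρ * (U g ⊗ₖ V h)) g h
    have h2 : (U g ⊗ₖ V h) * ((U g ⊗ₖ V h)ᴴ * ρ * (U g ⊗ₖ V h)) * (U g ⊗ₖ V h)ᴴ = ρ := by
      calc _ = ((U g ⊗ₖ V h) * (U g ⊗ₖ V h)ᴴ) * ρ * ((U g ⊗ₖ V h) * (U g ⊗ₖ V h)ᴴ) := by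
            simp only [Matrix.mul_assoc]
        _ = ρ := by rw [hUV]; simp
    rw [h2] at h1
    rw [h1]
    generalize N ((U g ⊗ₖ V h)ᴴ * ρ * (U g ⊗ₖ V h)) = M
    calc _ = ((Wm g h ⊗ₖ Tm g h)ᴴ * (Wm g h ⊗ₖ Tm g h)) * M
            * ((Wm g h ⊗ₖ Tm g h)ᴴ * (Wm g h ⊗ₖ Tm g h)) := by
            simp only [Matrix.mul_assoc]
      _ = M := by rw [hWT]; simp
  rw [key]
  ext ⟨i, i'⟩ ⟨j, j'⟩
  rw [tele_N]
  have hX : ∀ l' m' l m, ((U g ⊗ₖ V h)ᴴ * ρ * (U g ⊗ₖ V h)) (l', m') (l, m)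
      = ∑ x, ∑ y, ∑ x', ∑ y', star (U g x' l') * star (V h y' m') * ρ (x', y') (x, y)
          * (U g x l * V h y m) := by
    intro l' m' l m
    simp only [Matrix.mul_apply, Fintype.sum_prod_type, conjTranspose_apply, kroneckerMap_apply,
      Finset.sum_mul, star_mul']
  simp only [Matrix.smul_apply, smul_eq_mul, ptraceL, Matrix.of_apply]
  have hL : ∀ x l y m,
      ((((((a : ℂ) ^ 2 / (Fintype.card G : ℂ)) •
                  ((U g ⊗ₖ (1 : Matrix (Fin a) (Fin a) ℂ)) * maxEntSq a *
                    ((U g ⊗ₖ (1 : Matrix (Fin a) (Fin a) ℂ)))ᴴ)) ⊗ₖ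
                (((b : ℂ) ^ 2 / (Fintype.card H : ℂ)) •
                  ((V h ⊗ₖ (1 : Matrix (Fin b) (Fin b) ℂ)) * maxEntSq b *
                    ((V h ⊗ₖ (1 : Matrix (Fin b) (Fin b) ℂ)))ᴴ))) ⊗ₖ
              (1 : Matrix (Fin ao × Fin bo) (Fin ao × Fin bo) ℂ)) *
            ((ρ ⊗ₖ extendChannel N (maxEntSq a ⊗ₖ maxEntSq b)).submatrix
              (teleEquiv (Fin a) (Fin a) (Fin b) (Fin b) (Fin ao) (Fin bo))
              (teleEquiv (Fin a) (Fin a) (Fin b) (Fin b) (Fin ao) (Fin bo))))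
        (((x, l), (y, m)), (i, i')) (((x, l), (y, m)), (j, j'))
      = ∑ x', ∑ l', ∑ y', ∑ m', ((Fintype.card G : ℂ) * (Fintype.card H : ℂ))⁻¹ *
          (star (U g x' l') * star (V h y' m') * ρ (x', y') (x, y)
          * (U g x l * V h y m) * N (Matrix.single (l', m') (l, m) 1) (i, i') (j, j')) := by
    intro x l y m
    rw [Matrix.mul_apply, Fintype.sum_prod_type]
    simp only [kroneckerMap_apply _ _ (1 : Matrix (Fin ao × Fin bo) (Fin ao × Fin bo) ℂ),
      Matrix.one_apply, mul_ite, mul_one, mul_zero, ite_mul, zero_mul, Finset.sum_ite_eq,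
      Finset.mem_univ, if_true]
    simp only [Fintype.sum_prod_type]
    refine Finset.sum_congr rfl fun x' _ => Finset.sum_congr rfl fun l' _ =>
      Finset.sum_congr rfl fun y' _ => Finset.sum_congr rfl fun m' _ => ?_
    simp only [kroneckerMap_apply, Matrix.smul_apply, tele_E, submatrix_apply, smul_eq_mul,
      teleEquiv, Equiv.coe_fn_mk, tele_theta]
    field_simp
  simp only [Fintype.sum_prod_type, hL, hX]
  simp only [Finset.mul_sum, Finset.sum_mul]
  have hc : ∀ z : ℂ, (Fintype.card G : ℂ) * (Fintype.card H : ℂ) *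
      (((Fintype.card G : ℂ) * (Fintype.card H : ℂ))⁻¹ * z) = z := by
    intro z; field_simp
  simp only [hc]
  exact tele_reorder (fun x l y m x' l' y' m' => star (U g x' l') * star (V h y' m') * ρ (x', y') (x, y)
    * (U g x l * V h y m) * N (Matrix.single (l', m') (l, m) 1) (i, i') (j, j'))
end
end

section
/- Let M ≥ 1, ε ∈ [0,1), and let ω be a density matrix on ℂ^M ⊗ ℂ^M satisfying Tr(Φ ω) ≥ 1 − ε, where Φ is the maximally entangled state of Schmidt rank M. Let σ be any positive semidefinite matrix on ℂ^M ⊗ ℂ^M with ‖T_B σ‖₁ ≤ 1 (i.e. σ ∈ PPT'(A:B)), and let λ ∈ ℝ be such that 2^λ σ − ω is positive semidefinite. Then λ ≥ log₂((1 − ε)·M). Equivalently, the max-Rains relative entropy R_max(A;B)_ω = min_{σ ∈ PPT'(A:B)} D_max(ω‖σ) satisfies R_max(A;B)_ω ≥ log₂((1 − ε)·M). -/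
open Matrix
open scoped ComplexOrder

noncomputable section

/-- Partial transpose over the second tensor factor. -/
def ptB {X Y : Type*} (M : Matrix (X × Y) (X × Y) ℂ) : Matrix (X × Y) (X × Y) ℂ :=
  Matrix.of fun p q => M (p.1, q.2) (q.1, p.2)

theorem trace_re_le_aux {n : Type*} [Fintype n] [DecidableEq n] (X A : Matrix n n ℂ)
    (h : Aᴴ * A = Xᴴ * X) : A.trace.re ≤ traceNorm X := by
  unfold traceNorm
  set hH := (Matrix.posSemidef_conjTranspose_mul_self X).1
  set V : Matrix n n ℂ := (hH.eigenvectorUnitary : Matrix n n ℂ) with hV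
  have hVV : V * Vᴴ = 1 := by
    have := Unitary.mul_star_self_of_mem hH.eigenvectorUnitary.2
    simpa [star_eq_conjTranspose] using this
  have hVV' : Vᴴ * V = 1 := by
    have := Unitary.star_mul_self_of_mem hH.eigenvectorUnitary.2
    simpa [star_eq_conjTranspose] using this
  have hsp : Xᴴ * X = V * diagonal (fun i => (hH.eigenvalues i : ℂ)) * Vᴴ := by
    have := hH.spectral_theorem
    rw [Unitary.conjStarAlgAut_apply] at this
    exact this
  set B := Vᴴ * A * V with hB
  have htr : B.trace = A.trace := by
    rw [hB, Matrix.trace_mul_comm, ← Matrix.mul_assoc, hVV, Matrix.one_mul]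
  have hBB : Bᴴ * B = diagonal (fun i => (hH.eigenvalues i : ℂ)) := by
    calc Bᴴ * B = Vᴴ * Aᴴ * (V * Vᴴ) * A * V := by
          simp only [hB, conjTranspose_mul, conjTranspose_conjTranspose, Matrix.mul_assoc]
      _ = Vᴴ * (Aᴴ * A) * V := by rw [hVV]; simp only [Matrix.mul_one, Matrix.mul_assoc]
      _ = (Vᴴ * V) * diagonal (fun i => (hH.eigenvalues i : ℂ)) * (Vᴴ * V) := by
          rw [h.trans hsp]; simp only [Matrix.mul_assoc]
      _ = _ := by rw [hVV']; simp
  rw [← htr, Matrix.trace, Complex.re_sum]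
  refine Finset.sum_le_sum fun i _ => ?_
  apply Real.le_sqrt_of_sq_le
  have h1 := congrFun (congrFun hBB i) i
  rw [Matrix.mul_apply, diagonal_apply_eq] at h1
  have h2 : ∑ k, ‖B k i‖ ^ 2 = hH.eigenvalues i := by
    have h3 : ∀ k, Bᴴ i k * B k i = ((‖B k i‖ ^ 2 : ℝ) : ℂ) := by
      intro k
      rw [conjTranspose_apply]
      push_cast
      exact Complex.conj_mul' _
    simp_rw [h3] at h1
    exact_mod_cast h1
  rw [← h2]
  calc (B.diag i).re ^ 2 ≤ ‖B i i‖ ^ 2 := by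
        rw [← sq_abs]
        gcongr
        exact Complex.abs_re_le_norm _
    _ ≤ _ := Finset.single_le_sum (f := fun k => ‖B k i‖ ^ 2) (fun k _ => by positivity)
        (Finset.mem_univ i)

theorem trace_maxEnt_aux {M : ℕ} (N : Matrix (Fin M × Fin M) (Fin M × Fin M) ℂ) :
    (maxEntSq M * N).trace = (M : ℂ)⁻¹ * ∑ i, ∑ j, N (i, i) (j, j) := by
  simp only [Matrix.trace, diag_apply, Matrix.mul_apply, maxEntSq, of_apply,
    Fintype.sum_prod_type, ite_and, ite_mul, zero_mul, Finset.sum_ite_eq', Finset.sum_ite_eq,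
    Finset.sum_ite_irrel, Finset.sum_const_zero, Finset.mem_univ, if_true, Finset.mul_sum]
  rw [Finset.sum_comm]

theorem sum_nonneg_aux {M : ℕ} (N : Matrix (Fin M × Fin M) (Fin M × Fin M) ℂ)
    (hN : N.PosSemidef) : 0 ≤ (∑ i, ∑ j, N (i, i) (j, j)).re := by
  have h := hN.dotProduct_mulVec_nonneg (fun p => if p.2 = p.1 then (1 : ℂ) else 0)
  have h' := (Complex.le_def.1 h).1
  have e : star (fun p : Fin M × Fin M => if p.2 = p.1 then (1 : ℂ) else 0) ⬝ᵥ
      (N *ᵥ (fun p => if p.2 = p.1 then (1 : ℂ) else 0)) = ∑ i, ∑ j, N (i, i) (j, j) := by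
    simp [dotProduct, mulVec, Fintype.sum_prod_type, apply_ite]
  rw [e] at h'
  simpa using h'

theorem sum_le_aux {M : ℕ} (σ : Matrix (Fin M × Fin M) (Fin M × Fin M) ℂ) :
    (∑ i, ∑ j, σ (i, i) (j, j)).re ≤ traceNorm (ptB σ) := by
  have h := trace_re_le_aux (ptB σ) ((ptB σ).submatrix (Equiv.prodComm (Fin M) (Fin M)) id) (by
    rw [conjTranspose_submatrix, submatrix_mul_equiv, submatrix_id_id])
  have e : ((ptB σ).submatrix (Equiv.prodComm (Fin M) (Fin M)) id).trace
      = ∑ i, ∑ j, σ (i, i) (j, j) := by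
    simp only [Matrix.trace, diag_apply, submatrix_apply, ptB, of_apply, Fintype.sum_prod_type]
    rw [Finset.sum_comm]
    simp
  rwa [e] at h

/-- if `Tr(Φ ω) ≥ 1 − ε`, `σ ∈ PPT'` and `2^λ σ − ω ⪰ 0`, then
`λ ≥ log₂((1 − ε) M)`; i.e. the max-Rains relative entropy of `ω` is at least
`log₂((1 − ε) M)`. -/
theorem stmt8 {M : ℕ} (hM : 1 ≤ M) (ε : ℝ) (hε : ε ∈ Set.Ico (0:ℝ) 1)
    (ω : Matrix (Fin M × Fin M) (Fin M × Fin M) ℂ) (hω : DensityMatrix ω)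
    (hfid : 1 - ε ≤ ((maxEntSq M * ω).trace).re)
    (σ : Matrix (Fin M × Fin M) (Fin M × Fin M) ℂ) (hσ : σ.PosSemidef)
    (hppt : traceNorm (ptB σ) ≤ 1)
    (lam : ℝ) (hlam : ((((2:ℝ) ^ lam : ℝ) : ℂ) • σ - ω).PosSemidef) :
    Real.logb 2 ((1 - ε) * M) ≤ lam := by
  have hMpos : (0 : ℝ) < M := by exact_mod_cast hM
  have hpos : (0 : ℝ) < (2 : ℝ) ^ lam := by positivity
  have hN := sum_nonneg_aux _ hlam
  simp only [Matrix.sub_apply, Matrix.smul_apply, smul_eq_mul, Finset.sum_sub_distrib,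
    ← Finset.mul_sum, Complex.sub_re, Complex.re_ofReal_mul] at hN
  have hS := (sum_le_aux σ).trans hppt
  rw [trace_maxEnt_aux, show ((M : ℂ))⁻¹ = (((M : ℝ)⁻¹ : ℝ) : ℂ) by push_cast; rfl,
    Complex.re_ofReal_mul, inv_mul_eq_div, le_div_iff₀ hMpos] at hfid
  rw [Real.logb_le_iff_le_rpow (by norm_num) (mul_pos (by linarith [hε.2]) hMpos)]
  nlinarith
end
end

section
/- Define two quantum channels M¹, M² from 4×4 matrices (input basis |00⟩,|01⟩,|10⟩,|11⟩ of ℂ² ⊗ ℂ²) to 2×2 matrices by M^x(ρ) = ∑_{j=1}^{5} A^x_j ρ (A^x_j)†, with Kraus operators A¹₁ = |0⟩⟨00|, A¹₂ = |0⟩⟨01|, A¹₃ = |0⟩⟨10|, A¹₄ = (1/√2)|0⟩⟨11|, A¹₅ = (1/√2)|1⟩⟨11|, and A²₁ = |+⟩⟨00|, A²₂ = |+⟩⟨01|, A²₃ = |1⟩⟨1+|, A²₄ = (1/√2)|0⟩⟨1−|, A²₅ = (1/√2)|1⟩⟨1−|, where |±⟩ = (|0⟩ ± |1⟩)/√2,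 |1+⟩ = |1⟩⊗|+⟩, |1−⟩ = |1⟩⊗|−⟩. Then for every n ≥ 1, all sequences x, y ∈ {1,2}ⁿ with x ≠ y, every finite reference dimension r ≥ 1, and every density matrix σ on ℂ^r ⊗ (ℂ⁴)^{⊗n}: Tr[ (id_r ⊗ M^{x₁} ⊗ ⋯ ⊗ M^{xₙ})(σ) · (id_r ⊗ M^{y₁} ⊗ ⋯ ⊗ M^{yₙ})(σ) ] > 0. In other words, no input state makes the outputs of the two channel sequences orthogonal, so the sequences can never be perfectly discriminated by a non-adaptive strategy. -/
open Matrix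
open scoped ComplexOrder

noncomputable section

/-- `|0⟩`. -/
def v0 : Fin 2 → ℂ := fun b => if b = 0 then 1 else 0
/-- `|1⟩`. -/
def v1 : Fin 2 → ℂ := fun b => if b = 1 then 1 else 0
/-- `|+⟩`. -/
def vp : Fin 2 → ℂ := fun _ => ((Real.sqrt 2 : ℝ) : ℂ)⁻¹
/-- `|−⟩`. -/
def vm : Fin 2 → ℂ := fun b =>
  if b = 0 then ((Real.sqrt 2 : ℝ) : ℂ)⁻¹ else -((Real.sqrt 2 : ℝ) : ℂ)⁻¹

/-- `⟨00|`, etc., as vectors on `ℂ² ⊗ ℂ²` (all real, so no conjugation is needed). -/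
def w00 : Fin 2 × Fin 2 → ℂ := fun p => v0 p.1 * v0 p.2
def w01 : Fin 2 × Fin 2 → ℂ := fun p => v0 p.1 * v1 p.2
def w10 : Fin 2 × Fin 2 → ℂ := fun p => v1 p.1 * v0 p.2
def w11 : Fin 2 × Fin 2 → ℂ := fun p => v1 p.1 * v1 p.2
def w1p : Fin 2 × Fin 2 → ℂ := fun p => v1 p.1 * vp p.2
def w1m : Fin 2 × Fin 2 → ℂ := fun p => v1 p.1 * vm p.2

/-- The Kraus operators `A^x_j` of the two channels `M¹` (`x = 0`) and `M²` (`x = 1`). -/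
def Ak : Fin 2 → Fin 5 → Matrix (Fin 2) (Fin 2 × Fin 2) ℂ := fun x =>
  if x = 0 then
    ![Matrix.vecMulVec v0 w00, Matrix.vecMulVec v0 w01, Matrix.vecMulVec v0 w10,
      ((Real.sqrt 2 : ℝ) : ℂ)⁻¹ • Matrix.vecMulVec v0 w11,
      ((Real.sqrt 2 : ℝ) : ℂ)⁻¹ • Matrix.vecMulVec v1 w11]
  else
    ![Matrix.vecMulVec vp w00, Matrix.vecMulVec vp w01, Matrix.vecMulVec v1 w1p,
      ((Real.sqrt 2 : ℝ) : ℂ)⁻¹ • Matrix.vecMulVec v0 w1m,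
      ((Real.sqrt 2 : ℝ) : ℂ)⁻¹ • Matrix.vecMulVec v1 w1m]

/-- Joint Kraus operator of `id_r ⊗ M^{x₁} ⊗ ⋯ ⊗ M^{xₙ}` labelled by `j : Fin n → Fin 5`. -/
def bigK (r n : ℕ) (x : Fin n → Fin 2) (j : Fin n → Fin 5) :
    Matrix (Fin r × (Fin n → Fin 2)) (Fin r × (Fin n → Fin 2 × Fin 2)) ℂ :=
  Matrix.of fun p q => (if p.1 = q.1 then 1 else 0) * ∏ i, Ak (x i) (j i) (p.2 i) (q.2 i)

/-- The output `(id_r ⊗ M^{x₁} ⊗ ⋯ ⊗ M^{xₙ})(σ)`. -/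
def outState (r n : ℕ) (x : Fin n → Fin 2)
    (σ : Matrix (Fin r × (Fin n → Fin 2 × Fin 2)) (Fin r × (Fin n → Fin 2 × Fin 2)) ℂ) :
    Matrix (Fin r × (Fin n → Fin 2)) (Fin r × (Fin n → Fin 2)) ℂ :=
  ∑ j : Fin n → Fin 5, bigK r n x j * σ * (bigK r n x j)ᴴ

def bigM (r n : ℕ) {α β : Type} (M : Fin n → Matrix α β ℂ) :
    Matrix (Fin r × (Fin n → α)) (Fin r × (Fin n → β)) ℂ :=
  Matrix.of fun p q => (if p.1 = q.1 then 1 else 0) * ∏ i, M i (p.2 i) (q.2 i)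

theorem bigM_mul (r n : ℕ) {α β γ : Type} [Fintype β] [DecidableEq β]
    (M : Fin n → Matrix α β ℂ) (N : Fin n → Matrix β γ ℂ) :
    bigM r n M * bigM r n N = bigM r n (fun i => M i * N i) := by
  ext p q
  simp only [bigM, Matrix.mul_apply, Matrix.of_apply, Fintype.sum_prod_type]
  rw [Finset.prod_univ_sum, Finset.sum_eq_single p.1]
  · simp only [Fintype.piFinset_univ, Finset.prod_mul_distrib, Finset.mul_sum]
    apply Finset.sum_congr rfl
    intro f _
    simp
  · intro b _ hb
    simp [Ne.symm hb]
  · simp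

theorem bigM_conjTranspose (r n : ℕ) {α β : Type} (M : Fin n → Matrix α β ℂ) :
    (bigM r n M)ᴴ = bigM r n (fun i => (M i)ᴴ) := by
  ext p q
  by_cases h : p.1 = q.1
  · simp [bigM, h]
  · simp [bigM, h, Ne.symm h]

theorem bigM_one (r n : ℕ) {α : Type} [Fintype α] [DecidableEq α] :
    bigM r n (fun _ => (1 : Matrix α α ℂ)) = 1 := by
  ext p q
  obtain ⟨p1, p2⟩ := p
  obtain ⟨q1, q2⟩ := q
  simp only [bigM, Matrix.of_apply, Matrix.one_apply, Prod.mk.injEq, Finset.prod_boole]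
  by_cases h : p1 = q1 <;> simp [h, funext_iff]

theorem bigM_sum (r n : ℕ) {α β κ : Type} [Fintype κ] [DecidableEq κ]
    (c : Fin n → κ → ℂ) (M : Fin n → κ → Matrix α β ℂ) :
    ∑ p : Fin n → κ, (∏ i, c i (p i)) • bigM r n (fun i => M i (p i))
      = bigM r n (fun i => ∑ k, c i k • M i k) := by
  ext p q
  simp only [bigM, Matrix.of_apply, Matrix.sum_apply, Matrix.smul_apply, smul_eq_mul]
  rw [Finset.prod_univ_sum, Finset.mul_sum, Fintype.piFinset_univ]
  apply Finset.sum_congr rfl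
  intro f _
  rw [Finset.prod_mul_distrib]; ring

theorem s_sq : ((Real.sqrt 2 : ℝ) : ℂ)⁻¹ * ((Real.sqrt 2 : ℝ) : ℂ)⁻¹ = 1 / 2 := by
  rw [← mul_inv, ← Complex.ofReal_mul, Real.mul_self_sqrt (by norm_num)]
  norm_num

def Cm : Matrix (Fin 2 × Fin 2) (Fin 2 × Fin 2) ℂ :=
  Matrix.of fun p q => if p = q then 1 else if p = (1,0) ∧ q = (1,1) then -1 else 0
def Dm : Matrix (Fin 2 × Fin 2) (Fin 2 × Fin 2) ℂ :=
  Matrix.of fun p q => if p = q then 1 else if p = (1,0) ∧ q = (1,1) then 1 else 0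

theorem DC : Dm * Cm = 1 := by
  ext ⟨p, p'⟩ ⟨q, q'⟩
  fin_cases p <;> fin_cases p' <;> fin_cases q <;> fin_cases q' <;>
    simp [Dm, Cm, Matrix.mul_apply, Fintype.sum_prod_type, Matrix.one_apply]

theorem loc_same (a : Fin 2) :
    ∑ j, (Ak a j)ᴴ * Ak a j = 1 := by
  have h := s_sq
  ext ⟨p, p'⟩ ⟨q, q'⟩
  fin_cases a <;>
  fin_cases p <;> fin_cases p' <;> fin_cases q <;> fin_cases q' <;>
    simp [Ak, Fin.sum_univ_succ, Matrix.mul_apply, Matrix.vecMulVec_apply, Matrix.one_apply,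
      w00, w01, w10, w11, w1p, w1m, v0, v1, vp, vm] <;>
    grind

def s2 : ℂ := ((Real.sqrt 2 : ℝ) : ℂ)⁻¹

theorem loc_diff :
    (2 * s2) • ((Ak 0 0)ᴴ * Ak 1 0) + (2 * s2) • ((Ak 0 1)ᴴ * Ak 1 1)
      + (2:ℂ) • ((Ak 0 2)ᴴ * Ak 1 3) + (-6 * s2) • ((Ak 0 3)ᴴ * Ak 1 3)
      + (1:ℂ) • ((Ak 0 4)ᴴ * Ak 1 2) = Cmᴴ * Cm := by
  have h := s_sq
  ext ⟨p, p'⟩ ⟨q, q'⟩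
  fin_cases p <;> fin_cases p' <;> fin_cases q <;> fin_cases q' <;>
    simp [Ak, s2, Cm, Fin.sum_univ_succ, Matrix.mul_apply, Matrix.vecMulVec_apply,
      Fintype.sum_prod_type,
      w00, w01, w10, w11, w1p, w1m, v0, v1, vp, vm] <;>
    grind

def cc : Fin 5 × Fin 5 → ℂ := fun p =>
  (if p = (0,0) then 2 * s2 else 0) + (if p = (1,1) then 2 * s2 else 0)
  + (if p = (2,3) then 2 else 0) + (if p = (3,3) then -6 * s2 else 0)
  + (if p = (4,2) then 1 else 0)

theorem cc_sum {M : Type} [AddCommGroup M] [Module ℂ M] (f : Fin 5 × Fin 5 → M) :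
    ∑ p, cc p • f p = (2 * s2) • f (0,0) + (2 * s2) • f (1,1) + (2:ℂ) • f (2,3)
      + (-6 * s2) • f (3,3) + (1:ℂ) • f (4,2) := by
  simp only [cc, add_smul, Finset.sum_add_distrib, ite_smul, zero_smul, Finset.sum_ite_eq',
    Finset.sum_ite_eq, Finset.mem_univ, if_true]

theorem loc01 : ∑ p : Fin 5 × Fin 5, cc p • ((Ak 0 p.1)ᴴ * Ak 1 p.2) = Cmᴴ * Cm := by
  rw [cc_sum (fun p => (Ak 0 p.1)ᴴ * Ak 1 p.2), loc_diff]

theorem loc (a b : Fin 2) : ∃ (c : Fin 5 × Fin 5 → ℂ)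
    (C D : Matrix (Fin 2 × Fin 2) (Fin 2 × Fin 2) ℂ), D * C = 1 ∧
    ∑ p : Fin 5 × Fin 5, c p • ((Ak a p.1)ᴴ * Ak b p.2) = Cᴴ * C := by
  by_cases hab : a = b
  · subst hab
    refine ⟨fun p => if p.1 = p.2 then 1 else 0, 1, 1, by simp, ?_⟩
    rw [Fintype.sum_prod_type]
    simp [loc_same]
  · have : (a = 0 ∧ b = 1) ∨ (a = 1 ∧ b = 0) := by omega
    rcases this with ⟨rfl, rfl⟩ | ⟨rfl, rfl⟩
    · exact ⟨cc, Cm, Dm, DC, loc01⟩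
    · refine ⟨fun p => star (cc p.swap), Cm, Dm, DC, ?_⟩
      have := congrArg Matrix.conjTranspose loc01
      simp only [Matrix.conjTranspose_sum, Matrix.conjTranspose_smul, Matrix.conjTranspose_mul,
        Matrix.conjTranspose_conjTranspose] at this
      rw [← this]
      exact Fintype.sum_equiv (Equiv.prodComm _ _) _ _ (fun p => rfl)

theorem glob (r n : ℕ) (x y : Fin n → Fin 2) :
    ∃ (c : (Fin n → Fin 5 × Fin 5) → ℂ)
      (C D : Matrix (Fin r × (Fin n → Fin 2 × Fin 2)) (Fin r × (Fin n → Fin 2 × Fin 2)) ℂ),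
      D * C = 1 ∧ ∑ p, c p • ((bigK r n x (fun i => (p i).1))ᴴ * bigK r n y (fun i => (p i).2))
        = Cᴴ * C := by
  choose c C D hDC h using fun i => loc (x i) (y i)
  refine ⟨fun p => ∏ i, c i (p i), bigM r n C, bigM r n D, ?_, ?_⟩
  · rw [bigM_mul]; simp only [hDC, bigM_one]
  · rw [bigM_conjTranspose, bigM_mul]
    simp only [← h]
    rw [← bigM_sum]
    apply Finset.sum_congr rfl
    intro p _
    rw [← bigM_mul, ← bigM_conjTranspose]
    rfl

/-- for the two channels `M¹, M²` above, no non-adaptive strategy can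
perfectly discriminate different channel-sequences: the outputs are never orthogonal. -/
theorem stmt10 (n : ℕ) (hn : 1 ≤ n) (x y : Fin n → Fin 2) (hxy : x ≠ y)
    (r : ℕ) (hr : 1 ≤ r)
    (σ : Matrix (Fin r × (Fin n → Fin 2 × Fin 2)) (Fin r × (Fin n → Fin 2 × Fin 2)) ℂ)
    (hσ : DensityMatrix σ) :
    0 < ((outState r n x σ * outState r n y σ).trace).re := by
  obtain ⟨hp, htr⟩ := hσ
  obtain ⟨B, hB⟩ : ∃ B : Matrix (Fin r × (Fin n → Fin 2 × Fin 2))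
      (Fin r × (Fin n → Fin 2 × Fin 2)) ℂ, σ = Bᴴ * B := by
    open scoped MatrixOrder in
    exact CStarAlgebra.nonneg_iff_eq_star_mul_self.mp hp.nonneg
  subst hB
  obtain ⟨c, C, D, hDC, hC⟩ := glob r n x y
  set M := fun j k => B * ((bigK r n x j)ᴴ * bigK r n y k) * Bᴴ with hM
  have key : (outState r n x (Bᴴ * B) * outState r n y (Bᴴ * B)).trace
      = ∑ j, ∑ k, (M j k * (M j k)ᴴ).trace := by
    simp only [outState, Finset.sum_mul, Finset.mul_sum, Matrix.trace_sum]
    rw [Finset.sum_comm]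
    refine Finset.sum_congr rfl fun j _ => Finset.sum_congr rfl fun k _ => ?_
    simp only [hM, Matrix.conjTranspose_mul, Matrix.conjTranspose_conjTranspose]
    simp only [← Matrix.mul_assoc]
    rw [Matrix.trace_mul_comm _ Bᴴ]
    simp only [← Matrix.mul_assoc]
    rw [Matrix.trace_mul_comm _ (bigK r n x j)]
    simp only [Matrix.mul_assoc]
  have hnn : ∀ j k, 0 ≤ (M j k * (M j k)ᴴ).trace := fun j k =>
    (Matrix.posSemidef_self_mul_conjTranspose (M j k)).trace_nonneg
  rw [key]
  have h0 : 0 ≤ ∑ j, ∑ k, (M j k * (M j k)ᴴ).trace :=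
    Finset.sum_nonneg fun j _ => Finset.sum_nonneg fun k _ => hnn j k
  rcases h0.eq_or_lt with h | h
  · exfalso
    have h1 := (Finset.sum_eq_zero_iff_of_nonneg
      (fun j _ => Finset.sum_nonneg fun k _ => hnn j k)).1 h.symm
    have hz : ∀ j k, M j k = 0 := fun j k => by
      have h2 := (Finset.sum_eq_zero_iff_of_nonneg (fun k _ => hnn j k)).1
        (h1 j (Finset.mem_univ _)) k (Finset.mem_univ _)
      exact Matrix.trace_mul_conjTranspose_self_eq_zero_iff.1 h2
    have h3 : B * (Cᴴ * C) * Bᴴ = 0 := by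
      rw [← hC, Finset.mul_sum, Finset.sum_mul]
      refine Finset.sum_eq_zero fun p _ => ?_
      rw [Matrix.mul_smul, Matrix.smul_mul]
      have := hz (fun i => (p i).1) (fun i => (p i).2)
      simp only [hM] at this
      rw [this, smul_zero]
    have h4 : (C * Bᴴ)ᴴ * (C * Bᴴ) = 0 := by
      rw [Matrix.conjTranspose_mul, Matrix.conjTranspose_conjTranspose, ← h3]
      simp only [Matrix.mul_assoc]
    have h5 : C * Bᴴ = 0 := Matrix.conjTranspose_mul_self_eq_zero.1 h4
    have h6 : Bᴴ = 0 := by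
      rw [← Matrix.one_mul Bᴴ, ← hDC, Matrix.mul_assoc, h5, Matrix.mul_zero]
    rw [h6] at htr
    simp at htr
  · exact (Complex.lt_def.1 h).1
end
end
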